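/- arXiv:1803.01882 — 2 statements merged into one kernel-verified Lean document; each statement's English description precedes it below -/
import Mathlib

section
/- There exists a constant C > 0 such that for every n ≥ 2 there is a natural number m ≤ C·n^{log₂(31)/5} and a symmetric function G : {0,1}^m × {0,1}^m → {0,1} with the property: for every tuple of pairs (p_1, r_1), …, (p_n, r_n) with p_i ∈ ℝ² and r_i ∈ ℝ, r_i > 0, there exists F : {1,…,n} → {0,1}^m such that for all i ≠ j, G(F(i), F(j)) = 1 if and only if the Euclidean distance from p_i to p_j is at most r_i + r_j. (Note log₂(31)/5 ≈ 0.990839 < 1.) -/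
/-!
For balls with centers `p`, `q` and radii `r`, `s` in a Euclidean space `E`, the quantity
`|p - q| ^ 2 - (r + s) ^ 2` is a bilinear form in `(p, r, |p| ^ 2 - r ^ 2, 1)` and a vector
depending on `q` and `s`. So the rows of the adjacency matrix are the sign patterns of linear forms
on a space of dimension `d = dim E + 3`, and the Sauer–Shelah lemma bounds the shatter function of
the matrix by a polynomial of degree `d`.

By Welzl's iterative reweighting, such a matrix on `n` columns admits an ordering of its columns in
which every row changes its value only `O(n ^ (1 - 1 / d) * log n)` times. Listing the changes of
its row and the position of a vertex in this ordering takes `O(n ^ (1 - 1 / d) * (log n) ^ 2)` bits.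
For the plane `d = 5`, and `4 / 5 < logb 2 31 / 5` leaves room for the logarithms.
-/

namespace DiskRepresentation

open Finset Module

section ShatterBound

variable {ι α : Type*}

/-- The rows in `R` separate the columns in `P` of the Boolean matrix `M`: distinct columns in `P`
have distinct restrictions to `R`. -/
def Separates (M : ι → α → Bool) (R : Finset ι) (P : Finset α) : Prop :=
  ∀ x ∈ P, ∀ y ∈ P, (∀ i ∈ R, M i x = M i y) → x = y

/-- The (dual) shatter function of the Boolean matrix `M` is polynomial of degree `d`: any `m` rows
have at most `(m + 1) ^ d` distinct traces on the columns. -/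
def ShatterBound (M : ι → α → Bool) (d : ℕ) : Prop :=
  ∀ R P, Separates M R P → #P ≤ (#R + 1) ^ d

lemma sum_choose_le_add_one_pow (n d : ℕ) : ∑ k ∈ Iic d, n.choose k ≤ (n + 1) ^ d := by
  rw [add_pow, Nat.range_succ_eq_Iic]
  gcongr with k hk
  calc n.choose k ≤ n ^ k * 1 ^ (d - k) * 1 := by simpa using Nat.choose_le_pow n k
    _ ≤ n ^ k * 1 ^ (d - k) * d.choose k := by gcongr; exact Nat.choose_pos (mem_Iic.1 hk)

lemma linearIndependent_of_forall_signs {κ K V : Type*} [Finite κ] [Field K] [LinearOrder K]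
    [IsStrictOrderedRing K] [AddCommGroup V] [Module K V] (v : κ → V)
    (hv : ∀ t : Set κ, ∃ φ : Dual K V, ∀ i, φ (v i) ≤ 0 ↔ i ∈ t) : LinearIndependent K v := by
  cases nonempty_fintype κ
  have coeff_nonneg : ∀ g : κ → K, ∑ i, g i • v i = 0 → ∀ i, 0 ≤ g i := by
    intro g hg i₀
    by_contra! hi₀
    obtain ⟨φ, hφ⟩ := hv {i | 0 ≤ g i}
    have term_neg : ∀ i, g i < 0 → g i * φ (v i) < 0 := fun i hi ↦
      mul_neg_of_neg_of_pos hi <| lt_of_not_ge <| (hφ i).not.2 (not_le.2 hi)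
    have term_nonpos : ∀ i, g i * φ (v i) ≤ 0 := fun i ↦
      (lt_or_ge (g i) 0).elim (fun hi ↦ (term_neg i hi).le) fun hi ↦
        mul_nonpos_of_nonneg_of_nonpos hi ((hφ i).2 hi)
    have sum_neg : ∑ i, g i * φ (v i) < 0 :=
      sum_neg' (fun i _ ↦ term_nonpos i) ⟨i₀, mem_univ _, term_neg i₀ hi₀⟩
    have sum_eq : ∑ i, g i * φ (v i) = 0 := by simpa using congrArg φ hg
    exact sum_neg.ne sum_eq
  rw [Fintype.linearIndependent_iff]
  intro g hg i
  have hneg : 0 ≤ -g i := coeff_nonneg (-g) (by simp [hg]) i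
  exact le_antisymm (neg_nonneg.1 hneg) (coeff_nonneg g hg i)

lemma shatterBound_of_sign_representation {K V : Type*} [Field K] [LinearOrder K]
    [IsStrictOrderedRing K] [AddCommGroup V] [Module K V] [FiniteDimensional K V]
    {M : ι → α → Bool} (v : ι → V) (φ : α → Dual K V)
    (hM : ∀ i x, M i x = true ↔ φ x (v i) ≤ 0) : ShatterBound M (finrank K V) := by
  classical
  intro R P hRP
  let trace (x : α) : Finset R := {i | M i x = true}
  have trace_injOn : Set.InjOn trace P := fun x hx y hy hxy ↦ hRP x hx y hy fun i hi ↦ by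
    simpa [trace, hi] using Finset.ext_iff.1 hxy ⟨i, hi⟩
  have vcDim_le : (P.image trace).vcDim ≤ finrank K V := by
    refine Finset.sup_le fun s hs ↦ ?_
    rw [mem_shatterer] at hs
    have indep : LinearIndependent K fun i : s ↦ v i := by
      refine linearIndependent_of_forall_signs _ fun t ↦ ?_
      obtain ⟨_, hu, hsu⟩ := hs (t := {i ∈ s | i ∈ Subtype.val '' t}) (filter_subset _ _)
      obtain ⟨x, -, rfl⟩ := mem_image.1 hu
      refine ⟨φ x, fun i ↦ ?_⟩
      rw [← hM]
      simpa [trace] using Finset.ext_iff.1 hsu i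
    exact (Fintype.card_coe s).symm.trans_le indep.fintype_card_le_finrank
  calc #P = #(P.image trace) := (card_image_of_injOn trace_injOn).symm
    _ ≤ ∑ k ∈ Iic (P.image trace).vcDim, (Fintype.card R).choose k :=
      (card_le_card_shatterer _).trans card_shatterer_le_sum_vcDim
    _ ≤ ∑ k ∈ Iic (finrank K V), (Fintype.card R).choose k := by gcongr
    _ ≤ (#R + 1) ^ finrank K V := by simpa using sum_choose_le_add_one_pow #R (finrank K V)

section Ball

variable {E : Type*}

/-- The Boolean adjacency matrix of the intersection graph of the closed balls with centers `p i`
and radii `r i`. -/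
noncomputable def ballMatrix [PseudoMetricSpace E] (p : ι → E) (r : ι → ℝ) (i j : ι) : Bool :=
  decide (dist (p i) (p j) ≤ r i + r j)

lemma ballMatrix_comm [PseudoMetricSpace E] (p : ι → E) (r : ι → ℝ) (i j : ι) :
    ballMatrix p r i j = ballMatrix p r j i := by
  simp only [ballMatrix, dist_comm, add_comm]

lemma shatterBound_ballMatrix [NormedAddCommGroup E] [InnerProductSpace ℝ E]
    [FiniteDimensional ℝ E] (p : ι → E) {r : ι → ℝ} (hr : ∀ i, 0 ≤ r i) :
    ShatterBound (ballMatrix p r) (finrank ℝ E + 3) := by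
  let v (i : ι) : E × ℝ × ℝ × ℝ := (p i, r i, ‖p i‖ ^ 2 - r i ^ 2, 1)
  let φ (j : ι) : Dual ℝ (E × ℝ × ℝ × ℝ) :=
    (-2 • innerₗ E (p j)).coprod <| (LinearMap.lsmul ℝ ℝ (-2 * r j)).coprod <|
      LinearMap.id.coprod <| LinearMap.lsmul ℝ ℝ (‖p j‖ ^ 2 - r j ^ 2)
  have sign (i j : ι) : ballMatrix p r i j = true ↔ φ j (v i) ≤ 0 := by
    have eval : φ j (v i) = dist (p i) (p j) ^ 2 - (r i + r j) ^ 2 := by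
      rw [dist_eq_norm, norm_sub_sq_real, real_inner_comm]
      simp [φ, v]
      ring
    rw [eval, sub_nonpos, sq_le_sq₀ dist_nonneg (add_nonneg (hr i) (hr j))]
    simp [ballMatrix]
  simpa using shatterBound_of_sign_representation v φ sign

end Ball

end ShatterBound

section ShortEdge

variable {ι α : Type*}

/-- The pairs of columns in `Q` that no row in `R` tells apart. -/
def unseparatedPairs (M : ι → α → Bool) (R : Finset ι) (Q : Finset (α × α)) : Finset (α × α) :=
  {q ∈ Q | ∀ i ∈ R, M i q.1 = M i q.2}

lemma mem_unseparatedPairs {M : ι → α → Bool} {R : Finset ι} {Q : Finset (α × α)} {q : α × α} :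
    q ∈ unseparatedPairs M R Q ↔ q ∈ Q ∧ ∀ i ∈ R, M i q.1 = M i q.2 :=
  mem_filter

variable [Fintype ι]

/-- The total `w`-weight of the rows of `M` that tell the columns `x` and `y` apart. -/
def separationWeight (M : ι → α → Bool) (w : ι → ℝ) (x y : α) : ℝ :=
  ∑ i with M i x ≠ M i y, w i

lemma exists_mul_card_le_card_filter_ne [Nonempty ι] (M : ι → α → Bool) {w : ι → ℝ}
    (hw : ∀ i, 0 < w i) {Q : Finset (α × α)} {δ : ℝ}
    (hQ : ∀ q ∈ Q, δ * ∑ i, w i ≤ separationWeight M w q.1 q.2) :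
    ∃ i, δ * #Q ≤ #{q ∈ Q | M i q.1 ≠ M i q.2} := by
  have average_le : ∑ i, w i * (δ * #Q) ≤ ∑ i, w i * #{q ∈ Q | M i q.1 ≠ M i q.2} := by
    calc ∑ i, w i * (δ * #Q) = ∑ _q ∈ Q, δ * ∑ i, w i := by
          rw [sum_const, ← sum_mul, nsmul_eq_mul]
          ring
      _ ≤ ∑ q ∈ Q, separationWeight M w q.1 q.2 := sum_le_sum hQ
      _ = ∑ i, w i * #{q ∈ Q | M i q.1 ≠ M i q.2} := by
          simp only [separationWeight, sum_filter, card_filter]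
          rw [sum_comm]
          simp [mul_sum]
  obtain ⟨i, -, hi⟩ := exists_le_of_sum_le univ_nonempty average_le
  exact ⟨i, le_of_mul_le_mul_left hi (hw i)⟩

lemma exists_card_unseparatedPairs_le [Nonempty ι] (M : ι → α → Bool) {w : ι → ℝ}
    (hw : ∀ i, 0 < w i) {Q : Finset (α × α)} {δ : ℝ}
    (hQ : ∀ q ∈ Q, δ * ∑ i, w i ≤ separationWeight M w q.1 q.2) (m : ℕ) :
    ∃ R : Finset ι, #R ≤ m ∧
      (#(unseparatedPairs M R Q) : ℝ) ≤ #Q * Real.exp (-(δ * m)) := by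
  classical
  induction m with
  | zero => exact ⟨∅, by simp [unseparatedPairs]⟩
  | succ m ih =>
    obtain ⟨R, hR, hle⟩ := ih
    set U := unseparatedPairs M R Q
    obtain ⟨i, hi⟩ := exists_mul_card_le_card_filter_ne M hw (Q := U) (δ := δ)
      fun q hq ↦ hQ q (mem_unseparatedPairs.1 hq).1
    refine ⟨insert i R, (card_insert_le i R).trans (by gcongr), ?_⟩
    have unseparatedPairs_insert :
        unseparatedPairs M (insert i R) Q = {q ∈ U | M i q.1 = M i q.2} := by
      ext q
      simp only [U, mem_unseparatedPairs, mem_filter, forall_mem_insert]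
      tauto
    have card_split : (#{q ∈ U | M i q.1 = M i q.2} : ℝ) + #{q ∈ U | M i q.1 ≠ M i q.2} = #U :=
      mod_cast card_filter_add_card_filter_not (s := U) fun q ↦ M i q.1 = M i q.2
    rw [unseparatedPairs_insert]
    calc (#{q ∈ U | M i q.1 = M i q.2} : ℝ) ≤ #U * (-δ + 1) := by linarith
      _ ≤ #U * Real.exp (-δ) := by gcongr; exact Real.add_one_le_exp _
      _ ≤ #Q * Real.exp (-(δ * m)) * Real.exp (-δ) := by gcongr
      _ = #Q * Real.exp (-(δ * ↑(m + 1))) := by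
        rw [mul_assoc, ← Real.exp_add]
        push_cast
        ring_nf

lemma exists_separates_of_le_separationWeight [Nonempty ι] (M : ι → α → Bool) {w : ι → ℝ}
    (hw : ∀ i, 0 < w i) {P : Finset α} (hP : P.Nonempty) {δ : ℝ}
    (hδ : ∀ x ∈ P, ∀ y ∈ P, x ≠ y → δ * ∑ i, w i ≤ separationWeight M w x y) {m : ℕ}
    (hm : 2 * Real.log #P ≤ δ * m) : ∃ R : Finset ι, #R ≤ m ∧ Separates M R P := by
  classical
  obtain ⟨R, hR, hle⟩ := exists_card_unseparatedPairs_le M hw (Q := P.offDiag) (δ := δ)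
    (fun q hq ↦ by
      obtain ⟨hx, hy, hxy⟩ := mem_offDiag.1 hq
      exact hδ _ hx _ hy hxy) m
  have card_pos : (0 : ℝ) < #P := mod_cast hP.card_pos
  have card_offDiag_lt : (#P.offDiag : ℝ) < #P ^ 2 := by
    have : #P.offDiag < #P ^ 2 := by
      rw [offDiag_card, sq]
      exact Nat.sub_lt (Nat.mul_pos hP.card_pos hP.card_pos) hP.card_pos
    exact_mod_cast this
  have card_lt_one : (#(unseparatedPairs M R P.offDiag) : ℝ) < 1 := by
    calc (#(unseparatedPairs M R P.offDiag) : ℝ)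
      _ ≤ #P.offDiag * Real.exp (-(δ * m)) := hle
      _ ≤ #P.offDiag * Real.exp (-(2 * Real.log #P)) := by gcongr
      _ < #P ^ 2 * Real.exp (-(2 * Real.log #P)) := by gcongr
      _ = 1 := by
        rw [Real.exp_neg, mul_comm 2, Real.exp_mul, Real.exp_log card_pos, Real.rpow_two,
          mul_inv_cancel₀ (by positivity)]
  have unseparatedPairs_eq_empty := card_eq_zero.1 (Nat.lt_one_iff.1 (mod_cast card_lt_one))
  refine ⟨R, hR, fun x hx y hy hxy ↦ ?_⟩
  by_contra hne
  have mem_empty : (x, y) ∈ (∅ : Finset (α × α)) := by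
    rw [← unseparatedPairs_eq_empty]
    exact mem_unseparatedPairs.2 ⟨mem_offDiag.2 ⟨hx, hy, hne⟩, hxy⟩
  exact notMem_empty _ mem_empty

/-- Otherwise `O(1 / δ) * log #P` greedily chosen rows, where `δ` is the claimed relative weight,
separate `P`, which is more columns than the shatter bound allows. -/
lemma exists_separationWeight_le [Nonempty ι] {M : ι → α → Bool} {d : ℕ} (hM : ShatterBound M d)
    (hd : d ≠ 0) {w : ι → ℝ} (hw : ∀ i, 0 < w i) {P : Finset α} (hP : 2 ≤ #P) :
    ∃ x ∈ P, ∃ y ∈ P, x ≠ y ∧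
      separationWeight M w x y ≤ 8 * Real.log #P * (#P : ℝ) ^ (-(d : ℝ)⁻¹) * ∑ i, w i := by
  by_contra! hcon
  set δ := 8 * Real.log #P * (#P : ℝ) ^ (-(d : ℝ)⁻¹) with hδ
  set s := (#P : ℝ) ^ (d : ℝ)⁻¹ with hs
  have two_le_card : (2 : ℝ) ≤ #P := mod_cast hP
  have s_pos : 0 < s := by positivity
  have s_pow : s ^ d = #P := Real.rpow_inv_natCast_pow (by positivity) hd
  have δ_mul_s : δ * s = 8 * Real.log #P := by
    rw [hδ, Real.rpow_neg (by positivity), mul_assoc, inv_mul_cancel₀ s_pos.ne', mul_one]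
  have δ_lt_one : δ < 1 := by
    obtain ⟨x, hx, y, hy, hxy⟩ := one_lt_card.1 hP
    have weight_le : separationWeight M w x y ≤ ∑ i, w i :=
      sum_le_univ_sum_of_nonneg fun i ↦ (hw i).le
    have sum_pos : 0 < ∑ i, w i := sum_pos (fun i _ ↦ hw i) univ_nonempty
    exact lt_of_mul_lt_mul_right (by linarith [hcon x hx y hy hxy]) sum_pos.le
  have four_lt_s : 4 < s := by
    have log_two_le : Real.log 2 ≤ Real.log #P := by gcongr
    nlinarith [Real.log_two_gt_d9]
  obtain ⟨R, hR, hRP⟩ := exists_separates_of_le_separationWeight M hw (card_pos.1 (by lia))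
    (fun x hx y hy hxy ↦ (hcon x hx y hy hxy).le) (m := ⌈s / 4⌉₊) (by
      have δ_nonneg : 0 ≤ δ := by positivity
      linarith [mul_le_mul_of_nonneg_left (Nat.le_ceil (s / 4)) δ_nonneg])
  have s_pow_le : s ^ d ≤ (#R + 1 : ℝ) ^ d := by
    rw [s_pow]
    exact_mod_cast hM R P hRP
  have s_le : s ≤ #R + 1 := le_of_pow_le_pow_left₀ hd (by positivity) s_pow_le
  have card_R_lt : (#R : ℝ) < s / 4 + 1 :=
    (Nat.cast_le.2 hR).trans_lt (Nat.ceil_lt_add_one (by positivity))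
  linarith

end ShortEdge

section Ordering

/-- The number of indices at which a Boolean sequence changes its value. -/
def crossings : List Bool → ℕ
  | [] => 0
  | [_] => 0
  | a :: b :: l => (if a = b then 0 else 1) + crossings (b :: l)

lemma crossings_append_cons_cons_le (l₁ l₂ : List Bool) (x y : Bool) :
    crossings (l₁ ++ y :: x :: l₂) ≤ crossings (l₁ ++ y :: l₂) + 2 * if x = y then 0 else 1 := by
  induction l₁ with
  | nil => cases l₂ <;> grind [crossings]
  | cons a l₁ ih => cases l₁ <;> grind [crossings]

lemma two_pow_crossings_append_cons_cons_le (l₁ l₂ : List Bool) (x y : Bool) :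
    (2 : ℝ) ^ crossings (l₁ ++ y :: x :: l₂) ≤
      4 ^ (if x = y then 0 else 1) * 2 ^ crossings (l₁ ++ y :: l₂) := by
  calc (2 : ℝ) ^ crossings (l₁ ++ y :: x :: l₂)
      ≤ 2 ^ (crossings (l₁ ++ y :: l₂) + 2 * if x = y then 0 else 1) := by
        gcongr
        exacts [one_le_two, crossings_append_cons_cons_le _ _ _ _]
    _ = 4 ^ (if x = y then 0 else 1) * 2 ^ crossings (l₁ ++ y :: l₂) := by
        rw [add_comm, pow_add, pow_mul]
        norm_num

variable {ι α : Type*} [Fintype ι]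

lemma sum_mul_four_pow_eq (M : ι → α → Bool) (w : ι → ℝ) (x y : α) :
    ∑ i, w i * 4 ^ (if M i x = M i y then 0 else 1) =
      ∑ i, w i + 3 * separationWeight M w x y := by
  rw [separationWeight, sum_filter, mul_sum, ← sum_add_distrib]
  refine sum_congr rfl fun i _ ↦ ?_
  by_cases h : M i x = M i y
  · simp [h]
  · simp [h]
    ring

lemma sum_mul_four_pow_le {M : ι → α → Bool} {w : ι → ℝ} (hw : ∀ i, 0 ≤ w i) {x y : α} {δ : ℝ}
    (h : separationWeight M w x y ≤ δ * ∑ i, w i) :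
    ∑ i, w i * 4 ^ (if M i x = M i y then 0 else 1) ≤ (∑ i, w i) * Real.exp (3 * δ) := by
  have sum_nonneg : 0 ≤ ∑ i, w i := sum_nonneg fun i _ ↦ hw i
  calc ∑ i, w i * 4 ^ (if M i x = M i y then 0 else 1)
      = ∑ i, w i + 3 * separationWeight M w x y := sum_mul_four_pow_eq M w x y
    _ ≤ (∑ i, w i) * (3 * δ + 1) := by linarith
    _ ≤ (∑ i, w i) * Real.exp (3 * δ) := by gcongr; exact Real.add_one_le_exp _

/-- Remove a column `x` that is close to some column `y`, quadruple the weights of the rows that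
tell them apart, order the remaining columns, and reinsert `x` right after `y`: this produces at
most two new crossings, and only in the reweighted rows. -/
lemma exists_ordering_sum_two_pow_crossings_le {M : ι → α → Bool} {δ : ℕ → ℝ}
    (hδ : ∀ w : ι → ℝ, (∀ i, 0 < w i) → ∀ P : Finset α, 2 ≤ #P →
      ∃ x ∈ P, ∃ y ∈ P, x ≠ y ∧ separationWeight M w x y ≤ δ #P * ∑ i, w i)
    (k : ℕ) {w : ι → ℝ} (hw : ∀ i, 0 < w i) {P : Finset α} (hP : #P = k + 1) :
    ∃ L : List α, L.length = k + 1 ∧ (∀ x ∈ P, x ∈ L) ∧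
      ∑ i, w i * 2 ^ crossings (L.map (M i)) ≤
        (∑ i, w i) * Real.exp (3 * ∑ j ∈ range k, δ (j + 2)) := by
  classical
  induction k generalizing w P with
  | zero =>
    obtain ⟨x, rfl⟩ := card_eq_one.1 hP
    exact ⟨[x], by simp [crossings]⟩
  | succ k ih =>
    obtain ⟨x, hx, y, hy, hxy, weight_le⟩ := hδ w hw P (by lia)
    obtain ⟨L, hlen, hmem, hL⟩ := ih (w := fun i ↦ w i * 4 ^ (if M i x = M i y then 0 else 1))
      (fun i ↦ mul_pos (hw i) (by positivity)) (P := P.erase x)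
      (by rw [card_erase_of_mem hx, hP, Nat.add_sub_cancel])
    obtain ⟨l₁, l₂, rfl⟩ := List.append_of_mem (hmem y (mem_erase.2 ⟨hxy.symm, hy⟩))
    refine ⟨l₁ ++ y :: x :: l₂, by grind, fun z hz ↦ ?_, ?_⟩
    · have := hmem z
      grind
    calc ∑ i, w i * 2 ^ crossings ((l₁ ++ y :: x :: l₂).map (M i))
        ≤ ∑ i, w i * 4 ^ (if M i x = M i y then 0 else 1) *
            2 ^ crossings ((l₁ ++ y :: l₂).map (M i)) := by
          simp only [mul_assoc, List.map_append, List.map_cons]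
          gcongr with i
          exacts [(hw i).le, two_pow_crossings_append_cons_cons_le _ _ _ _]
      _ ≤ (∑ i, w i) * Real.exp (3 * δ (k + 2)) * Real.exp (3 * ∑ j ∈ range k, δ (j + 2)) :=
        hL.trans (by gcongr; exact sum_mul_four_pow_le (fun i ↦ (hw i).le) (hP ▸ weight_le))
      _ = (∑ i, w i) * Real.exp (3 * ∑ j ∈ range (k + 1), δ (j + 2)) := by
        rw [mul_assoc, ← Real.exp_add, sum_range_succ]
        ring_nf

lemma sum_add_two_rpow_neg_le {a : ℝ} (ha₀ : 0 ≤ a) (ha₁ : a < 1) (k : ℕ) :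
    ∑ j ∈ range k, (j + 2 : ℝ) ^ (-a) ≤ (k + 1 : ℝ) ^ (1 - a) / (1 - a) := by
  have antitone : AntitoneOn (fun x : ℝ ↦ x ^ (-a)) (Set.Icc 1 (1 + k)) := fun x hx y _ hxy ↦
    Real.rpow_le_rpow_of_nonpos (by linarith [hx.1]) hxy (by linarith)
  calc ∑ j ∈ range k, (j + 2 : ℝ) ^ (-a)
      = ∑ j ∈ range k, (1 + (j + 1 : ℕ) : ℝ) ^ (-a) := by
        congr! 2
        push_cast
        ring
    _ ≤ ∫ x in (1 : ℝ)..1 + k, x ^ (-a) := antitone.sum_le_integral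
    _ = ((k + 1 : ℝ) ^ (1 - a) - 1) / (1 - a) := by
        rw [integral_rpow (.inl (by linarith)), Real.one_rpow]
        ring_nf
    _ ≤ (k + 1 : ℝ) ^ (1 - a) / (1 - a) := by
        have : 0 < 1 - a := by linarith
        gcongr
        linarith

lemma sum_log_mul_rpow_neg_le {a : ℝ} (ha₀ : 0 ≤ a) (ha : a ≤ 1 / 2) (k : ℕ) :
    ∑ j ∈ range k, Real.log (j + 2) * (j + 2 : ℝ) ^ (-a) ≤
      2 * (k + 1 : ℝ) ^ (1 - a) * Real.log (k + 1) := by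
  have log_nonneg : 0 ≤ Real.log (k + 1) := Real.log_nonneg (by simp)
  calc ∑ j ∈ range k, Real.log (j + 2) * (j + 2 : ℝ) ^ (-a)
      ≤ ∑ j ∈ range k, Real.log (k + 1) * (j + 2 : ℝ) ^ (-a) := by
        refine sum_le_sum fun j hj ↦ mul_le_mul_of_nonneg_right ?_ (by positivity)
        have : (j + 1 : ℝ) ≤ k := mod_cast mem_range.1 hj
        exact Real.log_le_log (by positivity) (by linarith)
    _ ≤ Real.log (k + 1) * ((k + 1 : ℝ) ^ (1 - a) / (1 - a)) := by
        rw [← mul_sum]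
        gcongr
        exact sum_add_two_rpow_neg_le ha₀ (by linarith) k
    _ ≤ Real.log (k + 1) * ((k + 1 : ℝ) ^ (1 - a) / (1 / 2)) := by
        gcongr
        linarith
    _ = 2 * (k + 1 : ℝ) ^ (1 - a) * Real.log (k + 1) := by ring

lemma exists_ordering_crossings_le [Fintype α] [Nonempty α] {M : ι → α → Bool} {d : ℕ}
    (hM : ShatterBound M d) (hd : 2 ≤ d) :
    ∃ L : List α, L.length = Fintype.card α ∧ (∀ x, x ∈ L) ∧
      ∀ i, crossings (L.map (M i)) ≤ 2 * (Real.log (Fintype.card ι) +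
        48 * (Fintype.card α : ℝ) ^ (1 - (d : ℝ)⁻¹) * Real.log (Fintype.card α)) := by
  cases isEmpty_or_nonempty ι with
  | inl _ => exact ⟨univ.toList, by simp⟩
  | inr _ =>
  obtain ⟨k, hk⟩ := Nat.exists_eq_succ_of_ne_zero (Fintype.card_ne_zero (α := α))
  obtain ⟨L, hlen, hmem, hL⟩ := exists_ordering_sum_two_pow_crossings_le
    (δ := fun k ↦ 8 * Real.log k * (k : ℝ) ^ (-(d : ℝ)⁻¹))
    (fun w hw P hP ↦ exists_separationWeight_le hM (by lia) hw hP) k (w := 1)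
    (fun _ ↦ one_pos) (P := univ) hk
  refine ⟨L, hlen.trans hk.symm, fun x ↦ hmem x (mem_univ x), fun i ↦ ?_⟩
  simp only [Pi.one_apply, one_mul, sum_const, card_univ, nsmul_eq_mul, mul_one] at hL
  have inv_le : (d : ℝ)⁻¹ ≤ 1 / 2 := by
    rw [one_div]
    gcongr
    exact_mod_cast hd
  have sum_le := sum_log_mul_rpow_neg_le (a := (d : ℝ)⁻¹) (by positivity) inv_le k
  have two_pow_le : (2 : ℝ) ^ crossings (L.map (M i)) ≤ Fintype.card ι *
      Real.exp (48 * (Fintype.card α : ℝ) ^ (1 - (d : ℝ)⁻¹) * Real.log (Fintype.card α)) := by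
    calc (2 : ℝ) ^ crossings (L.map (M i)) ≤ ∑ i, (2 : ℝ) ^ crossings (L.map (M i)) :=
          single_le_sum (f := fun i ↦ (2 : ℝ) ^ crossings (L.map (M i)))
            (fun _ _ ↦ by positivity) (mem_univ i)
      _ ≤ _ := hL
      _ ≤ _ := by
        refine mul_le_mul_of_nonneg_left (Real.exp_le_exp.2 ?_) (by positivity)
        simp only [hk, Nat.succ_eq_add_one, Nat.cast_add, Nat.cast_ofNat, Nat.cast_one, mul_assoc,
          ← mul_sum] at sum_le ⊢
        linarith
  have log_le := Real.log_le_log (by positivity) two_pow_le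
  rw [Real.log_pow, Real.log_mul (by positivity) (Real.exp_ne_zero _), Real.log_exp] at log_le
  nlinarith [Real.log_two_gt_d9, (crossings (L.map (M i))).cast_nonneg (α := ℝ)]

end Ordering

section ImplicitRepresentation

/-- The Boolean matrices in `𝒞` have an implicit representation with `m` bits per index: a single
symmetric decoder recovers each of them, diagonal entries included, from labels of the indices. -/
def HasImplicitRepresentation {V : Type*} (m : ℕ) (𝒞 : Set (V → V → Bool)) : Prop :=
  ∃ G : (Fin m → Bool) → (Fin m → Bool) → Bool, (∀ a b, G a b = G b a) ∧
    ∀ M ∈ 𝒞, ∃ F : V → Fin m → Bool, ∀ i j, G (F i) (F j) = M i j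

lemma hasImplicitRepresentation_of_labels {V Λ : Type*} [Fintype Λ] {m : ℕ}
    (hm : Fintype.card Λ ≤ 2 ^ m) (D : Λ → Λ → Bool) (hD : ∀ u v, D u v = D v u)
    {𝒞 : Set (V → V → Bool)} (h𝒞 : ∀ M ∈ 𝒞, ∃ F : V → Λ, ∀ i j, D (F i) (F j) = M i j) :
    HasImplicitRepresentation m 𝒞 := by
  classical
  obtain ⟨e⟩ : Nonempty (Λ ↪ (Fin m → Bool)) :=
    Function.Embedding.nonempty_of_card_le (by simpa using hm)
  refine ⟨fun a b ↦ decide (∃ u v, e u = a ∧ e v = b ∧ D u v), fun a b ↦ ?_, fun M hM ↦ ?_⟩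
  · rw [decide_eq_decide, exists_comm]
    refine exists_congr fun u ↦ exists_congr fun v ↦ ?_
    rw [hD u v]
    tauto
  · obtain ⟨F, hF⟩ := h𝒞 M hM
    exact ⟨fun i ↦ e (F i), fun i j ↦ by simp [e.injective.eq_iff, hF]⟩

lemma exists_finset_crossings_cons_le (n t : ℕ) (b : Bool) :
    ∃ S : Finset (List Bool), #S ≤ (n + 1) ^ t ∧
      ∀ l : List Bool, l.length = n → crossings (b :: l) ≤ t → b :: l ∈ S := by
  induction n generalizing t b with
  | zero => exact ⟨{[b]}, by simp, by simp⟩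
  | succ n ih =>
    obtain ⟨S, hS, mem_S⟩ := ih t b
    cases t with
    | zero =>
      refine ⟨S.image (List.cons b), card_image_le.trans (by simpa using hS), fun l hl h ↦ ?_⟩
      obtain ⟨c, l, rfl⟩ := List.exists_cons_of_length_eq_add_one hl
      grind [crossings]
    | succ t =>
      obtain ⟨T, hT, mem_T⟩ := ih t !b
      refine ⟨(S ∪ T).image (List.cons b), card_image_le.trans ?_, fun l hl h ↦ ?_⟩
      · calc #(S ∪ T) ≤ (n + 1) ^ (t + 1) + (n + 1) ^ t := (card_union_le S T).trans (by gcongr)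
          _ = (n + 1) ^ t * (n + 2) := by ring
          _ ≤ (n + 2) ^ t * (n + 2) := by gcongr; lia
          _ = (n + 1 + 1) ^ (t + 1) := by ring
      · obtain ⟨c, l, rfl⟩ := List.exists_cons_of_length_eq_add_one hl
        cases b <;> cases c <;> grind [crossings]

lemma exists_finset_crossings_le {n : ℕ} (hn : n ≠ 0) (t : ℕ) :
    ∃ S : Finset (List Bool), #S ≤ 2 * n ^ t ∧
      ∀ l : List Bool, l.length = n → crossings l ≤ t → l ∈ S := by
  obtain ⟨n, rfl⟩ := Nat.exists_eq_add_one_of_ne_zero hn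
  obtain ⟨S, hS, mem_S⟩ := exists_finset_crossings_cons_le n t true
  obtain ⟨T, hT, mem_T⟩ := exists_finset_crossings_cons_le n t false
  refine ⟨S ∪ T, (card_union_le S T).trans (by lia), fun l hl h ↦ ?_⟩
  obtain ⟨b, l, rfl⟩ := List.exists_cons_of_length_eq_add_one hl
  cases b <;> grind

variable {V : Type*} [Fintype V] [Nonempty V]

/-- The label of `i` consists of its position in the ordering and of its row, read in that order. -/
lemma hasImplicitRepresentation_of_crossings_le (t : ℕ) :
    HasImplicitRepresentation (1 + Nat.clog 2 (Fintype.card V) * (t + 1))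
      {M : V → V → Bool | (∀ i j, M i j = M j i) ∧ ∃ L : List V, L.length = Fintype.card V ∧
        (∀ x, x ∈ L) ∧ ∀ i, crossings (L.map (M i)) ≤ t} := by
  obtain ⟨S, hS, mem_S⟩ := exists_finset_crossings_le (Fintype.card_ne_zero (α := V)) t
  have card_le : Fintype.card (Fin (Fintype.card V) × S) ≤
      2 ^ (1 + Nat.clog 2 (Fintype.card V) * (t + 1)) := by
    calc Fintype.card (Fin (Fintype.card V) × S) = Fintype.card V * #S := by simp
      _ ≤ Fintype.card V * (2 * Fintype.card V ^ t) := by gcongr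
      _ = 2 * Fintype.card V ^ (t + 1) := by ring
      _ ≤ 2 * (2 ^ Nat.clog 2 (Fintype.card V)) ^ (t + 1) := by
        gcongr
        exact Nat.le_pow_clog one_lt_two _
      _ = 2 ^ (1 + Nat.clog 2 (Fintype.card V) * (t + 1)) := by rw [← pow_mul, pow_add, pow_one]
  refine hasImplicitRepresentation_of_labels card_le
    (fun u v ↦ u.2.1.getD v.1 false && v.2.1.getD u.1 false) (fun u v ↦ Bool.and_comm _ _) ?_
  rintro M ⟨symm, L, hlen, hmem, hL⟩
  have exists_pos (i : V) : ∃ q : Fin (Fintype.card V), L[(q : ℕ)]? = some i := by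
    obtain ⟨q, hq, h⟩ := List.getElem_of_mem (hmem i)
    exact ⟨⟨q, hlen ▸ hq⟩, List.getElem?_eq_some_iff.2 ⟨hq, h⟩⟩
  choose pos getElem?_pos using exists_pos
  have mem_S_row (i : V) : L.map (M i) ∈ S := mem_S _ (by simpa using hlen) (hL i)
  refine ⟨fun i ↦ (pos i, ⟨L.map (M i), mem_S_row i⟩), fun i j ↦ ?_⟩
  simp [List.getD_eq_getElem?_getD, getElem?_pos, symm j i]

lemma clog_two_le_four_mul_log {n : ℕ} (hn : 2 ≤ n) : (Nat.clog 2 n : ℝ) ≤ 4 * Real.log n := by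
  have log_two_le : Real.log 2 ≤ Real.log n := Real.log_le_log two_pos (mod_cast hn)
  have clog_lt : (Nat.clog 2 n : ℝ) < Real.logb 2 n + 1 := by
    rw [← Real.natCeil_logb_natCast, Nat.cast_ofNat]
    exact Nat.ceil_lt_add_one (Real.logb_nonneg one_lt_two (by norm_cast; lia))
  have logb_le : Real.logb 2 n ≤ 2 * Real.log n := by
    rw [Real.logb, div_le_iff₀ (Real.log_pos one_lt_two)]
    nlinarith [Real.log_two_gt_d9]
  linarith [Real.log_two_gt_d9]

theorem hasImplicitRepresentation_of_shatterBound {d : ℕ} (hd : 2 ≤ d) (hV : 2 ≤ Fintype.card V) :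
    ∃ m : ℕ, (m : ℝ) ≤ 404 * (Fintype.card V : ℝ) ^ (1 - (d : ℝ)⁻¹) *
        Real.log (Fintype.card V) ^ 2 ∧
      HasImplicitRepresentation m
        {M : V → V → Bool | (∀ i j, M i j = M j i) ∧ ShatterBound M d} := by
  set x := (Fintype.card V : ℝ) ^ (1 - (d : ℝ)⁻¹)
  set y := Real.log (Fintype.card V)
  have hx : 1 ≤ x := Real.one_le_rpow (by norm_cast; lia)
    (sub_nonneg.2 (inv_le_one_of_one_le₀ (by norm_cast; lia)))
  have hy : 1 / 2 ≤ y := by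
    have : Real.log 2 ≤ y := Real.log_le_log two_pos (mod_cast hV)
    linarith [Real.log_two_gt_d9]
  set t := ⌊98 * x * y⌋₊
  have t_le : (t : ℝ) ≤ 98 * x * y := Nat.floor_le (by positivity)
  have clog_le := clog_two_le_four_mul_log hV
  refine ⟨1 + Nat.clog 2 (Fintype.card V) * (t + 1), ?_, ?_⟩
  · push_cast
    calc (1 + Nat.clog 2 (Fintype.card V) * (t + 1) : ℝ) ≤ 1 + 4 * y * (98 * x * y + 1) := by gcongr
      _ ≤ 404 * x * y ^ 2 := by nlinarith [mul_le_mul hx hy (by norm_num) (by positivity)]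
  · obtain ⟨G, G_symm, hG⟩ := hasImplicitRepresentation_of_crossings_le (V := V) t
    refine ⟨G, G_symm, fun M hM ↦ hG M ⟨hM.1, ?_⟩⟩
    obtain ⟨L, hlen, hmem, hL⟩ := exists_ordering_crossings_le hM.2 hd
    refine ⟨L, hlen, hmem, fun i ↦ Nat.le_floor ((hL i).trans ?_)⟩
    nlinarith

end ImplicitRepresentation

lemma exists_rpow_mul_log_sq_le {a b : ℝ} (hab : a < b) :
    ∃ C > 0, ∀ x : ℝ, 1 ≤ x → x ^ a * Real.log x ^ 2 ≤ C * x ^ b := by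
  obtain ⟨ε, hε, rfl⟩ : ∃ ε > 0, b = a + (ε + ε) := ⟨(b - a) / 2, by linarith, by ring⟩
  refine ⟨(ε ^ 2)⁻¹, by positivity, fun x hx ↦ ?_⟩
  have hx₀ : 0 < x := by linarith
  have log_nonneg : 0 ≤ Real.log x := Real.log_nonneg hx
  calc x ^ a * Real.log x ^ 2 ≤ x ^ a * (x ^ ε / ε) ^ 2 := by
        gcongr
        exact Real.log_le_rpow_div hx₀.le hε
    _ = (ε ^ 2)⁻¹ * (x ^ a * (x ^ ε * x ^ ε)) := by ring
    _ = (ε ^ 2)⁻¹ * x ^ (a + (ε + ε)) := by rw [Real.rpow_add hx₀, Real.rpow_add hx₀]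

lemma four_fifths_lt_logb_div_five : 4 / 5 < Real.logb 2 31 / 5 := by
  have : (4 : ℝ) < Real.logb 2 31 := (Real.lt_logb_iff_rpow_lt one_lt_two (by norm_num)).2
    (by norm_num)
  linarith

end DiskRepresentation

theorem disk_implicit_representation_general {E : Type*} [NormedAddCommGroup E]
    [InnerProductSpace ℝ E] [FiniteDimensional ℝ E] {n : ℕ} (hn : 2 ≤ n) :
    ∃ m : ℕ, (m : ℝ) ≤
        404 * (n : ℝ) ^ (1 - 1 / (Module.finrank ℝ E + 3 : ℝ)) * Real.log n ^ 2 ∧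
      ∃ G : (Fin m → Bool) → (Fin m → Bool) → Bool,
        (∀ a b, G a b = G b a) ∧
        ∀ (p : Fin n → E) (r : Fin n → ℝ), (∀ i, 0 ≤ r i) →
          ∃ F : Fin n → (Fin m → Bool),
            ∀ i j : Fin n, (G (F i) (F j) = true ↔ dist (p i) (p j) ≤ r i + r j) := by
  have : Nonempty (Fin n) := ⟨0, by lia⟩
  obtain ⟨m, hm, G, G_symm, hG⟩ :=
    DiskRepresentation.hasImplicitRepresentation_of_shatterBound (V := Fin n)
      (d := Module.finrank ℝ E + 3) (by lia) (by simpa using hn)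
  refine ⟨m, by simpa using hm, G, G_symm, fun p r hr ↦ ?_⟩
  obtain ⟨F, hF⟩ :=
    hG _ ⟨DiskRepresentation.ballMatrix_comm p r, DiskRepresentation.shatterBound_ballMatrix p hr⟩
  exact ⟨F, fun i j ↦ by simp [hF, DiskRepresentation.ballMatrix]⟩

/-- Disk graphs (vertices are closed disks in the plane with centers `p_i ∈ ℝ²` and radii
`r_i > 0`, with an edge when `|p_i − p_j| ≤ r_i + r_j`) admit implicit representations
with `m ≤ C·n^{log₂(31)/5}` bits per vertex. -/
theorem disk_implicit_representation :
    ∃ C : ℝ, 0 < C ∧ ∀ n : ℕ, 2 ≤ n →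
      ∃ m : ℕ, (m : ℝ) ≤ C * (n : ℝ) ^ (Real.logb 2 31 / 5) ∧
        ∃ G : (Fin m → Bool) → (Fin m → Bool) → Bool,
          (∀ a b, G a b = G b a) ∧
          ∀ (p : Fin n → EuclideanSpace ℝ (Fin 2)) (r : Fin n → ℝ), (∀ i, 0 < r i) →
            ∃ F : Fin n → (Fin m → Bool),
              ∀ i j : Fin n, i ≠ j →
                (G (F i) (F j) = true ↔ dist (p i) (p j) ≤ r i + r j) := by
  obtain ⟨C, hC, le_rpow⟩ :=
    DiskRepresentation.exists_rpow_mul_log_sq_le DiskRepresentation.four_fifths_lt_logb_div_five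
  refine ⟨404 * C, by positivity, fun n hn ↦ ?_⟩
  obtain ⟨m, hm, G, G_symm, hG⟩ :=
    disk_implicit_representation_general (E := EuclideanSpace ℝ (Fin 2)) hn
  refine ⟨m, hm.trans ?_, G, G_symm, fun p r hr ↦ ?_⟩
  · have exponent_eq :
        (1 - 1 / (Module.finrank ℝ (EuclideanSpace ℝ (Fin 2)) + 3) : ℝ) = 4 / 5 := by norm_num
    rw [exponent_eq, mul_assoc, mul_assoc]
    exact mul_le_mul_of_nonneg_left (le_rpow n (by norm_cast; lia)) (by norm_num)
  · obtain ⟨F, hF⟩ := hG p r fun i ↦ (hr i).le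
    exact ⟨F, fun i j _ ↦ hF i j⟩
end

section
/- Let x and y be complex numbers, and let p and q be nonzero polynomials with integer coefficients such that p(x) = 0 and q(y) = 0. Let a be the leading coefficient of p and b the leading coefficient of q. Then there exists a nonzero polynomial r with integer coefficients, of degree at most deg(p)·deg(q), such that r(a·b·(x − y)) = 0. -/
/-!
Scaling by the leading coefficients `a` and `b` makes the roots integral: `a * x` and `b * y` are
roots of monic polynomials `f` and `g` of the same degrees as `p` and `q`. Hence
`a * b * (x - y) = b * (a * x) - a * (b * y)` is the image of some `t ∈ R[X]/(f) ⊗ R[X]/(g)`. This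
ring is a free `R`-module of rank `deg p * deg q`, so by Cayley–Hamilton `t` is a root of the
characteristic polynomial of multiplication by `t`, which is monic with coefficients in `R`.
-/

open Polynomial

theorem exists_monic_natDegree_eq_finrank_aeval_eq_zero (R : Type*) {A : Type*} [CommRing R]
    [Nontrivial R] [Ring A] [Algebra R A] [Module.Free R A] [Module.Finite R A] (t : A) :
    ∃ r : R[X], r.Monic ∧ r.natDegree = Module.finrank R A ∧ aeval t r = 0 := by
  refine ⟨(Algebra.lmul R A t).charpoly, LinearMap.charpoly_monic _,
    LinearMap.charpoly_natDegree _, Algebra.lmul_injective (R := R) ?_⟩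
  rw [← aeval_algHom_apply, LinearMap.aeval_self_charpoly, map_zero]

section

variable {R S : Type*} [CommRing R] [CommRing S] [Algebra R S]

theorem exists_monic_natDegree_eq_mul_of_mem_range_sup_range [Nontrivial R] {A B : Type*}
    [CommRing A] [CommRing B] [Algebra R A] [Algebra R B] [Module.Free R A] [Module.Free R B]
    [Module.Finite R A] [Module.Finite R B] {φ : A →ₐ[R] S} {ψ : B →ₐ[R] S} {z : S}
    (hz : z ∈ φ.range ⊔ ψ.range) :
    ∃ r : R[X], r.Monic ∧ r.natDegree = Module.finrank R A * Module.finrank R B ∧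
      aeval z r = 0 := by
  rw [← Algebra.TensorProduct.productMap_range, AlgHom.mem_range] at hz
  obtain ⟨t, rfl⟩ := hz
  obtain ⟨r, hr, hdeg, hroot⟩ := exists_monic_natDegree_eq_finrank_aeval_eq_zero R t
  exact ⟨r, hr, hdeg.trans Module.finrank_tensorProduct, by
    rw [aeval_algHom_apply, hroot, map_zero]⟩

theorem exists_monic_natDegree_eq_mul_of_mem_adjoin_pair [Nontrivial R] {f g : R[X]}
    (hf : f.Monic) (hg : g.Monic) {u v z : S} (hu : aeval u f = 0) (hv : aeval v g = 0)
    (hz : z ∈ Algebra.adjoin R {u, v}) :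
    ∃ r : R[X], r.Monic ∧ r.natDegree = f.natDegree * g.natDegree ∧ aeval z r = 0 := by
  have := hf.free_adjoinRoot
  have := hg.free_adjoinRoot
  have := hf.finite_adjoinRoot
  have := hg.finite_adjoinRoot
  let φ := AdjoinRoot.liftAlgHom f (Algebra.ofId R S) u hu
  let ψ := AdjoinRoot.liftAlgHom g (Algebra.ofId R S) v hv
  have hφ : u ∈ φ.range := ⟨AdjoinRoot.root f, AdjoinRoot.liftAlgHom_root ..⟩
  have hψ : v ∈ ψ.range := ⟨AdjoinRoot.root g, AdjoinRoot.liftAlgHom_root ..⟩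
  have hle : Algebra.adjoin R {u, v} ≤ φ.range ⊔ ψ.range :=
    Algebra.adjoin_le (Set.pair_subset (Algebra.mem_sup_left hφ) (Algebra.mem_sup_right hψ))
  simpa only [(AdjoinRoot.powerBasis' hf).finrank, (AdjoinRoot.powerBasis' hg).finrank,
    AdjoinRoot.powerBasis'_dim] using
    exists_monic_natDegree_eq_mul_of_mem_range_sup_range (hle hz)

theorem difference_is_algebraic_general [FaithfulSMul R S] {p q : R[X]} (hp : p ≠ 0) (hq : q ≠ 0)
    {x y : S} (hx : aeval x p = 0) (hy : aeval y q = 0) :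
    ∃ r : R[X], r.Monic ∧ r.natDegree = p.natDegree * q.natDegree ∧
      aeval (algebraMap R S p.leadingCoeff * algebraMap R S q.leadingCoeff * (x - y)) r = 0 := by
  have : Nontrivial R := nontrivial_of_ne _ _ (leadingCoeff_ne_zero.mpr hp)
  have hinj : ∀ c : R, algebraMap R S c = 0 → c = 0 :=
    (injective_iff_map_eq_zero _).mp (FaithfulSMul.algebraMap_injective R S)
  set u := algebraMap R S p.leadingCoeff * x
  set v := algebraMap R S q.leadingCoeff * y
  have hu : aeval u p.integralNormalization = 0 := integralNormalization_aeval_eq_zero hx hinj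
  have hv : aeval v q.integralNormalization = 0 := integralNormalization_aeval_eq_zero hy hinj
  have hmem : q.leadingCoeff • u - p.leadingCoeff • v ∈ Algebra.adjoin R {u, v} :=
    sub_mem (Subalgebra.smul_mem _ (Algebra.subset_adjoin (by simp)) _)
      (Subalgebra.smul_mem _ (Algebra.subset_adjoin (by simp)) _)
  have hdiff : q.leadingCoeff • u - p.leadingCoeff • v =
      algebraMap R S p.leadingCoeff * algebraMap R S q.leadingCoeff * (x - y) := by
    simp only [Algebra.smul_def, u, v]
    ring
  simpa only [natDegree_integralNormalization, hdiff] using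
    exists_monic_natDegree_eq_mul_of_mem_adjoin_pair (monic_integralNormalization hp)
      (monic_integralNormalization hq) hu hv hmem

end

/-- If `x, y ∈ ℂ` are roots of nonzero integer polynomials `p, q` with leading coefficients
`a, b` respectively, then there is a nonzero integer polynomial `r` of degree at most
`deg(p)·deg(q)` with `r(a·b·(x − y)) = 0`. -/
theorem difference_is_algebraic (x y : ℂ) (p q : Polynomial ℤ) (hp : p ≠ 0) (hq : q ≠ 0)
    (hx : Polynomial.aeval x p = 0) (hy : Polynomial.aeval y q = 0) :
    ∃ r : Polynomial ℤ, r ≠ 0 ∧ r.natDegree ≤ p.natDegree * q.natDegree ∧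
      Polynomial.aeval ((p.leadingCoeff : ℂ) * (q.leadingCoeff : ℂ) * (x - y)) r = 0 := by
  obtain ⟨r, hr, hdeg, hroot⟩ := difference_is_algebraic_general hp hq hx hy
  exact ⟨r, hr.ne_zero, hdeg.le, hroot⟩
end
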